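/- Fix positive reals α, h̄, c̄, ρ̄_s, s, e, m, n, T = tanθ, and assume K = 0; set a := s·ρ̄_s/(e·h̄). Then for every real η, the characteristic polynomial of the matrix A(0,η) equals X·(X² + (a + α η² h̄)·X + α η² a h̄·(1 − m c̄/ρ̄_s)); consequently the eigenvalues of A(0,η) are 0 and λ±(η) = (−(a + α h̄ η²) ± √((a − α h̄ η²)² + 4 α η² a m h̄ c̄/ρ̄_s)) / 2. -/

import Mathlib

/-- The Fourier symbol `A(ξ,η) = A₀ + iξ·A₁ − (ξ²+η²)·A₂` of the linearized
landscape evolution system about the constant state `(h̄, c̄, 0)`, with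
`a = s·ρ̄ₛ/(e·h̄)` and slope parameter `T = tan θ`. -/
noncomputable def landA (α hb cb ρs s e m n T K : ℝ) (ξ η : ℝ) :
    Matrix (Fin 3) (Fin 3) ℂ :=
  ((!![0, 0, 0;
       (s * ρs / (e * hb)) * m * cb / hb, -(s * ρs / (e * hb)), 0;
       -((s * ρs / (e * hb)) * m * cb / ρs), (s * ρs / (e * hb)) * hb / ρs, 0] :
      Matrix (Fin 3) (Fin 3) ℝ).map Complex.ofReal)
  + (Complex.I * (ξ : ℂ)) •
    ((!![-T, 0, 0;
         -(α * (s * ρs / (e * hb)) * n * cb / T), -T,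
           -(α * (s * ρs / (e * hb)) * n * cb / T);
         α * (s * ρs / (e * hb)) * n * hb * cb / (ρs * T), 0,
           α * (s * ρs / (e * hb)) * n * hb * cb / (ρs * T)] :
        Matrix (Fin 3) (Fin 3) ℝ).map Complex.ofReal)
  - (((ξ ^ 2 + η ^ 2 : ℝ) : ℂ)) •
    ((!![α * hb, 0, α * hb; 0, 0, 0; 0, 0, K] :
        Matrix (Fin 3) (Fin 3) ℝ).map Complex.ofReal)

/-- Spectral stability: every eigenvalue (root of the characteristic
polynomial) has strictly negative real part. -/
def SpectrallyStable (A : Matrix (Fin 3) (Fin 3) ℂ) : Prop :=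
  ∀ z : ℂ, A.charpoly.IsRoot z → z.re < 0

open Polynomial

/-- The two nonzero eigenvalues `λ±(η)` of `A(0,η)` when `K = 0`. -/
noncomputable def lamP (α hb cb ρs a m : ℝ) (η : ℝ) : ℝ :=
  (-(a + α * hb * η ^ 2) +
      Real.sqrt ((a - α * hb * η ^ 2) ^ 2 + 4 * α * η ^ 2 * a * m * hb * cb / ρs)) / 2

noncomputable def lamM (α hb cb ρs a m : ℝ) (η : ℝ) : ℝ :=
  (-(a + α * hb * η ^ 2) -
      Real.sqrt ((a - α * hb * η ^ 2) ^ 2 + 4 * α * η ^ 2 * a * m * hb * cb / ρs)) / 2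

/-- When `K = 0` and `ξ = 0`, the characteristic polynomial of `A(0,η)`
factorizes as `X·(X² + (a + αη²h̄)X + αη²ah̄(1 − mc̄/ρ̄ₛ))`, so the eigenvalues
of `A(0,η)` are `0` and `λ±(η)`. -/
theorem charpoly_transverse_no_creep (α hb cb ρs s e m n T : ℝ)
    (hα : 0 < α) (hhb : 0 < hb) (hcb : 0 < cb) (hρs : 0 < ρs)
    (hs : 0 < s) (he : 0 < e) (hm : 0 < m) (hn : 0 < n) (hT : 0 < T) :
    ∀ η : ℝ,
      (landA α hb cb ρs s e m n T 0 0 η).charpoly =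
        X * (X ^ 2 + C ((s * ρs / (e * hb) + α * η ^ 2 * hb : ℝ) : ℂ) * X
          + C ((α * η ^ 2 * (s * ρs / (e * hb)) * hb * (1 - m * cb / ρs) : ℝ) : ℂ)) ∧
      (landA α hb cb ρs s e m n T 0 0 η).charpoly.IsRoot 0 ∧
      (landA α hb cb ρs s e m n T 0 0 η).charpoly.IsRoot
        ((lamP α hb cb ρs (s * ρs / (e * hb)) m η : ℝ) : ℂ) ∧
      (landA α hb cb ρs s e m n T 0 0 η).charpoly.IsRoot
        ((lamM α hb cb ρs (s * ρs / (e * hb)) m η : ℝ) : ℂ) ∧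
      ∀ z : ℂ, (landA α hb cb ρs s e m n T 0 0 η).charpoly.IsRoot z →
        z = 0 ∨ z = ((lamP α hb cb ρs (s * ρs / (e * hb)) m η : ℝ) : ℂ)
          ∨ z = ((lamM α hb cb ρs (s * ρs / (e * hb)) m η : ℝ) : ℂ) := by
  intro η
  have key : (landA α hb cb ρs s e m n T 0 0 η).charpoly =
        X * (X ^ 2 + C ((s * ρs / (e * hb) + α * η ^ 2 * hb : ℝ) : ℂ) * X
          + C ((α * η ^ 2 * (s * ρs / (e * hb)) * hb * (1 - m * cb / ρs) : ℝ) : ℂ)) := by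
    generalize ha : s * ρs / (e * hb) = a
    have hA : landA α hb cb ρs s e m n T 0 0 η =
        !![((-(α * η ^ 2 * hb) : ℝ) : ℂ), 0, ((-(α * η ^ 2 * hb) : ℝ) : ℂ);
           ((a * m * cb / hb : ℝ) : ℂ), ((-a : ℝ) : ℂ), 0;
           ((-(a * m * cb / ρs) : ℝ) : ℂ), ((a * hb / ρs : ℝ) : ℂ), 0] := by
      unfold landA
      rw [ha]
      ext i j
      fin_cases i <;> fin_cases j <;> simp <;> ring
    have h1 : (a * m * cb / hb) * (a * hb / ρs) = a * (a * m * cb / ρs) := by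
      field_simp
    have h2 : α * η ^ 2 * a * hb * (1 - m * cb / ρs) =
        (α * η ^ 2 * hb) * a - (α * η ^ 2 * hb) * (a * m * cb / ρs) := by
      field_simp
    rw [hA, h2]
    generalize a * m * cb / hb = q at *
    generalize a * hb / ρs = t at *
    generalize a * m * cb / ρs = r at *
    generalize α * η ^ 2 * hb = p at *
    have h3 : (C (q : ℂ) * C (t : ℂ) : ℂ[X]) = C (a : ℂ) * C (r : ℂ) := by
      rw [← C_mul, ← C_mul]
      exact_mod_cast congrArg (fun x : ℝ => C (x : ℂ)) h1
    rw [Matrix.charpoly, Matrix.det_fin_three]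
    simp [Matrix.charmatrix_apply]
    linear_combination C (p : ℂ) * h3
  have fac : ∀ z : ℂ, (landA α hb cb ρs s e m n T 0 0 η).charpoly.eval z =
      z * ((z - ((lamP α hb cb ρs (s * ρs / (e * hb)) m η : ℝ) : ℂ)) *
        (z - ((lamM α hb cb ρs (s * ρs / (e * hb)) m η : ℝ) : ℂ))) := by
    intro z
    rw [key]
    have ha : 0 < s * ρs / (e * hb) := by positivity
    generalize s * ρs / (e * hb) = a at *
    have hD : 0 ≤ (a - α * hb * η ^ 2) ^ 2 + 4 * α * η ^ 2 * a * m * hb * cb / ρs := by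
      positivity
    have hsum : lamP α hb cb ρs a m η + lamM α hb cb ρs a m η = -(a + α * η ^ 2 * hb) := by
      unfold lamP lamM; ring
    have hprod : lamP α hb cb ρs a m η * lamM α hb cb ρs a m η =
        α * η ^ 2 * a * hb * (1 - m * cb / ρs) := by
      unfold lamP lamM
      have := Real.sq_sqrt hD
      linear_combination (-1 / 4) * this
    rw [← hprod, show a + α * η ^ 2 * hb =
      -(lamP α hb cb ρs a m η + lamM α hb cb ρs a m η) by rw [hsum]; ring]
    simp only [eval_mul, eval_add, eval_X, eval_pow, eval_C]
    push_cast
    ring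
  refine ⟨key, ?_, ?_, ?_, ?_⟩
  · rw [IsRoot.def, fac]; simp
  · rw [IsRoot.def, fac]; simp
  · rw [IsRoot.def, fac]; simp
  · intro z hz
    rw [IsRoot.def, fac, mul_eq_zero, mul_eq_zero, sub_eq_zero, sub_eq_zero] at hz
    exact hz
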